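/- arXiv:1911.08441 — 2 statements merged into one kernel-verified Lean document; each statement's English description precedes it below -/
import Mathlib

section
/- Let L_{j,i} ∈ R = K[x_0, x_1, …, x_n] (1 ≤ j ≤ n, 1 ≤ i ≤ ℓ_j, n ≥ 2) be linear forms satisfying condition (α), set f_j = ∏_{i=1}^{ℓ_j} L_{j,i}, and let I = (f_i f_j : 1 ≤ i < j ≤ n) be the defining ideal of a complete grid or pseudo-grid of lines of type (ℓ_1, …, ℓ_n). Then for every h with 0 ≤ h ≤ n−2, dim_K Tor_{h+1}^R(R/I, R/(x_0, x_1, …, x_n)) = (h+1)·C(n, h+2), and Tor_j^R(R/I, R/(x_0, x_1, …, x_n)) = 0 for all j ≥ n; i.e., the mapping-cone resolution of I with free modules of ranks (h+1)·C(n, h+2) is minimal. -/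
open CategoryTheory MvPolynomial

/-- The dimension over `K` of (the carrier of) a module `M` over a `K`-algebra `R`. -/
noncomputable def kdim (K R : Type) [Field K] [CommRing R] [Algebra K R]
    (M : ModuleCat R) : Cardinal :=
  @Module.rank K M _ _ (Module.compHom M (algebraMap K R))

/-- `Tor_h^T(T/N, T/𝔪_T)` for `T = K[x_0,…,x_{m-1}]` with irrelevant maximal ideal `𝔪_T`. -/
noncomputable def torModule (K : Type) [Field K] (m : ℕ)
    (N : Ideal (MvPolynomial (Fin m) K)) (h : ℕ) : ModuleCat (MvPolynomial (Fin m) K) :=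
  ((Tor (ModuleCat (MvPolynomial (Fin m) K)) h).obj
      (ModuleCat.of _ (MvPolynomial (Fin m) K ⧸ N))).obj
    (ModuleCat.of _ (MvPolynomial (Fin m) K ⧸
      Ideal.span (Set.range (X : Fin m → MvPolynomial (Fin m) K))))

open MonoidalCategory in
/-- The functor `M ↦ M ⊗ P` for a fixed chain complex `P`. -/
noncomputable def tensorComplex {R : Type} [CommRing R] (P : ChainComplex (ModuleCat.{0} R) ℕ) :
    ModuleCat.{0} R ⥤ ChainComplex (ModuleCat.{0} R) ℕ where
  obj M := (((tensoringLeft _).obj M).mapHomologicalComplex _).obj P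
  map φ := (NatTrans.mapHomologicalComplex ((tensoringLeft _).map φ) _).app P

section Homological

variable {R : Type} [CommRing R] (P : ChainComplex (ModuleCat.{0} R) ℕ)

instance : (tensorComplex P).PreservesZeroMorphisms where
  map_zero M N := by
    ext i : 1
    exact MonoidalPreadditive.zero_whiskerRight

lemma tensorComplex_shortExact [∀ i, Module.Flat R (P.X i)] {S : ShortComplex (ModuleCat.{0} R)}
    (hS : S.ShortExact) : (S.map (tensorComplex P)).ShortExact := by
  apply HomologicalComplex.shortExact_of_degreewise_shortExact
  intro i
  have h := (ShortComplex.ShortExact.moduleCat_exact_iff_function_exact S).1 hS.exact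
  apply ModuleCat.shortComplex_shortExact
  · exact rTensor_exact (P.X i) h hS.moduleCat_surjective_g
  · exact Module.Flat.rTensor_preserves_injective_linearMap S.f.hom hS.moduleCat_injective_f
  · exact LinearMap.rTensor_surjective (P.X i) hS.moduleCat_surjective_g

/-- The length of the `h`-th homology of `M ⊗ P`. -/
noncomputable def torLength (h : ℕ) (M : ModuleCat.{0} R) : ℕ∞ :=
  Module.length R (((tensorComplex P).obj M).homology h)

/-- The map induced by `φ` on the `h`-th homology of `- ⊗ P`. -/
noncomputable abbrev torMap (h : ℕ) {M N : ModuleCat.{0} R} (φ : M ⟶ N) :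
    ((tensorComplex P).obj M).homology h ⟶ ((tensorComplex P).obj N).homology h :=
  HomologicalComplex.homologyMap ((tensorComplex P).map φ) h

lemma torMap_comp (h : ℕ) {M N L : ModuleCat.{0} R} (φ : M ⟶ N) (ψ : N ⟶ L) :
    torMap P h (φ ≫ ψ) = torMap P h φ ≫ torMap P h ψ := by
  simp [torMap, HomologicalComplex.homologyMap_comp]

lemma torMap_zero_surjective [∀ i, Module.Flat R (P.X i)] {M N : ModuleCat.{0} R} (φ : M ⟶ N)
    (hφ : Function.Surjective φ) : Function.Surjective (torMap P 0 φ) := by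
  rw [← ModuleCat.epi_iff_surjective]
  have h1 : Epi (((tensorComplex P).map φ).f 0) :=
    (ModuleCat.epi_iff_surjective _).2 (LinearMap.rTensor_surjective (P.X 0) hφ)
  have h2 : Epi (HomologicalComplex.cyclesMap ((tensorComplex P).map φ) 0) := by
    have : HomologicalComplex.cyclesMap ((tensorComplex P).map φ) 0 =
        (HomologicalComplex.iCycles _ 0 ≫ ((tensorComplex P).map φ).f 0) ≫
          inv (HomologicalComplex.iCycles _ 0) := by
      rw [← HomologicalComplex.cyclesMap_i, Category.assoc, IsIso.hom_inv_id, Category.comp_id]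
    rw [this]
    infer_instance
  have h3 : Epi (HomologicalComplex.homologyπ _ 0 ≫ torMap P 0 φ) := by
    rw [HomologicalComplex.homologyπ_naturality]
    infer_instance
  exact epi_of_epi (HomologicalComplex.homologyπ _ 0) _

section LongExact

variable [∀ i, Module.Flat R (P.X i)] {S : ShortComplex (ModuleCat.{0} R)}

lemma torMap_exact (hS : S.ShortExact) (h : ℕ) : Function.Exact (torMap P h S.f) (torMap P h S.g) :=
  (ShortComplex.ShortExact.moduleCat_exact_iff_function_exact _).1
    ((tensorComplex_shortExact P hS).homology_exact₂ h)

lemma exists_torMap_connecting (hS : S.ShortExact) (h : ℕ) :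
    ∃ δ : ((tensorComplex P).obj S.X₃).homology (h + 1) →ₗ[R]
        ((tensorComplex P).obj S.X₁).homology h,
      Function.Exact (torMap P (h + 1) S.g) δ ∧ Function.Exact δ (torMap P h S.f) :=
  ⟨((tensorComplex_shortExact P hS).δ (h + 1) h rfl).hom,
    (ShortComplex.ShortExact.moduleCat_exact_iff_function_exact _).1
      ((tensorComplex_shortExact P hS).homology_exact₃ (h + 1) h rfl),
    (ShortComplex.ShortExact.moduleCat_exact_iff_function_exact _).1
      ((tensorComplex_shortExact P hS).homology_exact₁ (h + 1) h rfl)⟩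

lemma torLength_succ_of_torMap_f_eq_zero (hS : S.ShortExact) (hf : ∀ h, torMap P h S.f = 0)
    (h : ℕ) :
    torLength P (h + 1) S.X₃ = torLength P (h + 1) S.X₂ + torLength P h S.X₁ := by
  obtain ⟨δ, h1, h2⟩ := exists_torMap_connecting P hS h
  refine Module.length_eq_add_of_exact (torMap P (h + 1) S.g).hom δ ?_ ?_ h1
  · rw [← LinearMap.ker_eq_bot, LinearMap.exact_iff.1 (torMap_exact P hS (h + 1)), hf]
    simp
  · intro y
    exact (h2 y).1 (by rw [hf]; rfl)

lemma torLength_zero_of_torMap_f_eq_zero (hS : S.ShortExact) (hf : torMap P 0 S.f = 0) :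
    torLength P 0 S.X₃ = torLength P 0 S.X₂ := by
  refine (LinearEquiv.ofBijective (torMap P 0 S.g).hom ⟨?_, ?_⟩).length_eq.symm
  · rw [← LinearMap.ker_eq_bot, LinearMap.exact_iff.1 (torMap_exact P hS 0), hf]
    simp
  · exact torMap_zero_surjective P _ hS.moduleCat_surjective_g

lemma torLength_left_of_torMap_g_eq_zero (hS : S.ShortExact) (h : ℕ)
    (hg : torMap P (h + 1) S.g = 0) :
    torLength P h S.X₁ = torLength P (h + 1) S.X₃ +
      Module.length R (LinearMap.ker (torMap P h S.g).hom) := by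
  obtain ⟨δ, h1, h2⟩ := exists_torMap_connecting P hS h
  have hex := torMap_exact P hS h
  refine Module.length_eq_add_of_exact δ
    ((torMap P h S.f).hom.codRestrict (LinearMap.ker (torMap P h S.g).hom) fun x ↦
      (hex _).2 ⟨x, rfl⟩) ?_ ?_ ?_
  · rw [← LinearMap.ker_eq_bot, LinearMap.exact_iff.1 h1, hg]
    simp
  · rintro ⟨y, hy⟩
    obtain ⟨x, rfl⟩ := (hex y).1 hy
    exact ⟨x, rfl⟩
  · intro y
    rw [← h2 y, Subtype.ext_iff]
    rfl

end LongExact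

section Homotopy

/-- Multiplication by `g` on `M ⊗ P` is null-homotopic if it is on `P`. -/
noncomputable def tensorHomotopy {g : R} (H : Homotopy (g • 𝟙 P) 0) (M : ModuleCat.{0} R) :
    Homotopy ((tensorComplex P).map (g • 𝟙 M)) 0 :=
  (Homotopy.ofEq (by
    ext i : 1
    simp [tensorComplex]
    rfl)).trans
    (((((MonoidalCategory.tensoringLeft _).obj M).mapHomotopy H)).trans
      (Homotopy.ofEq (by simp; rfl)))

lemma torMap_smul_eq_zero {g : R} (H : Homotopy (g • 𝟙 P) 0) (h : ℕ) {M N : ModuleCat.{0} R}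
    (φ : M ⟶ N) : torMap P h (g • φ) = 0 := by
  have : g • φ = (g • 𝟙 M) ≫ φ := by simp
  rw [this, torMap_comp]
  have h1 : torMap P h (g • 𝟙 M) = 0 := by
    rw [torMap, (tensorHomotopy P H M).homologyMap_eq h, HomologicalComplex.homologyMap_zero]
  rw [h1, Limits.zero_comp]

open MonoidalCategory in
lemma tensorHomotopy_hom {g : R} (H : Homotopy (g • 𝟙 P) 0) (M : ModuleCat.{0} R) (i j : ℕ) :
    (tensorHomotopy P H M).hom i j = M ◁ H.hom i j := by
  change 0 + (M ◁ H.hom i j + 0) = _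
  simp

lemma tensorHomotopy_hom_naturality {g : R} (H : Homotopy (g • 𝟙 P) 0) {M N : ModuleCat.{0} R}
    (φ : M ⟶ N) (i j : ℕ) :
    (tensorHomotopy P H M).hom i j ≫ ((tensorComplex P).map φ).f j =
      ((tensorComplex P).map φ).f i ≫ (tensorHomotopy P H N).hom i j := by
  rw [tensorHomotopy_hom, tensorHomotopy_hom]
  exact MonoidalCategory.whisker_exchange φ (H.hom i j)

lemma torMap_smul_id (h : ℕ) (g : R) (M : ModuleCat.{0} R) : torMap P h (g • 𝟙 M) = g • 𝟙 _ := by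
  have h1 : (tensorComplex P).map (g • 𝟙 M) = g • 𝟙 ((tensorComplex P).obj M) := by
    ext i : 1
    simp [tensorComplex]
    rfl
  rw [torMap, h1, ← HomologicalComplex.homologyMap_id]
  exact ShortComplex.homologyMap_smul (S₁ := ((tensorComplex P).obj M).sc h) (𝟙 _) g

end Homotopy

lemma homologyMap_eq_zero_iff {K L : ChainComplex (ModuleCat.{0} R) ℕ} (φ : K ⟶ L) (n m : ℕ)
    (hm : (ComplexShape.down ℕ).next n = m) :
    HomologicalComplex.homologyMap φ n = 0 ↔
      ∀ x : K.X n, K.d n m x = 0 → ∃ y : L.X (n + 1), L.d (n + 1) n y = φ.f n x := by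
  constructor
  · intro h x hx
    let k : ModuleCat.of R R ⟶ K.X n := ModuleCat.ofHom (LinearMap.toSpanSingleton R _ x)
    have hk : k ≫ K.d n m = 0 := by
      ext
      simpa [k] using hx
    let c : L.cycles n := (K.liftCycles k m hm hk ≫ HomologicalComplex.cyclesMap φ n) (1 : R)
    have hc : L.homologyπ n c = 0 := by
      have : (K.liftCycles k m hm hk ≫ HomologicalComplex.cyclesMap φ n) ≫ L.homologyπ n = 0 := by
        rw [Category.assoc, ← HomologicalComplex.homologyπ_naturality, h]
        simp
      exact congr($this (1 : R))
    have hex : (ShortComplex.mk (L.toCycles (n + 1) n) (L.homologyπ n) (by simp)).Exact :=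
      ShortComplex.exact_of_g_is_cokernel _
        (L.homologyIsCokernel (n + 1) n (by simp))
    obtain ⟨y, hy⟩ := ((ShortComplex.ShortExact.moduleCat_exact_iff_function_exact _).1 hex c).1 hc
    refine ⟨y, ?_⟩
    have h1 : L.iCycles n c = φ.f n x := by
      have : (K.liftCycles k m hm hk ≫ HomologicalComplex.cyclesMap φ n) ≫ L.iCycles n =
          k ≫ φ.f n := by simp
      have := congr($this (1 : R))
      exact this.trans (by simp [k])
    rw [← h1, ← hy]
    exact congr($(L.toCycles_i (n + 1) n).hom y).symm
  · intro h
    rw [← cancel_epi (K.homologyπ n), HomologicalComplex.homologyπ_naturality]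
    ext c
    obtain ⟨y, hy⟩ := h (K.iCycles n c) (congr($(K.iCycles_d n m).hom c))
    have : HomologicalComplex.cyclesMap φ n c = L.toCycles (n + 1) n y := by
      apply (ModuleCat.mono_iff_injective (L.iCycles n)).1 inferInstance
      have h1 := congr($(HomologicalComplex.cyclesMap_i φ n).hom c)
      have h2 := congr($(L.toCycles_i (n + 1) n).hom y)
      exact h1.trans (hy.symm.trans h2.symm)
    have h3 := congr($(L.toCycles_comp_homologyπ (n + 1) n).hom y)
    change L.homologyπ n (HomologicalComplex.cyclesMap φ n c) = _
    rw [this]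
    exact h3

open HomologicalComplex in
lemma torMap_succ_eq_zero_of_shortExact [∀ i, Module.Flat R (P.X i)]
    {S : ShortComplex (ModuleCat.{0} R)} (hS : S.ShortExact) {g : R} (H : Homotopy (g • 𝟙 P) 0)
    {ι : S.X₁ ⟶ S.X₂} (hι : S.f = g • ι) {D E : ModuleCat.{0} R} {ρ : S.X₂ ⟶ D}
    {τ : S.X₃ ⟶ E} {σ : D ⟶ E} (hιρ : ι ≫ ρ = 0) (hcomm : ρ ≫ σ = S.g ≫ τ) (h : ℕ)
    (hρ : torMap P (h + 1) ρ = 0) : torMap P (h + 1) τ = 0 := by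
  have hT := tensorComplex_shortExact P hS
  rw [homologyMap_eq_zero_iff _ (h + 1) h (by simp)] at hρ ⊢
  intro z hz
  obtain ⟨w, rfl⟩ : ∃ w, ((tensorComplex P).map S.g).f (h + 1) w = z :=
    LinearMap.rTensor_surjective (P.X (h + 1)) hS.moduleCat_surjective_g z
  have hex (i : ℕ) : Function.Exact (((tensorComplex P).map S.f).f i)
      (((tensorComplex P).map S.g).f i) :=
    rTensor_exact (P.X i) ((ShortComplex.ShortExact.moduleCat_exact_iff_function_exact S).1
      hS.exact) hS.moduleCat_surjective_g
  have hinj (i : ℕ) : Function.Injective (((tensorComplex P).map S.f).f i) :=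
    Module.Flat.rTensor_preserves_injective_linearMap S.f.hom hS.moduleCat_injective_f
  obtain ⟨a, ha⟩ : ∃ a, ((tensorComplex P).map S.f).f h a =
      ((tensorComplex P).obj S.X₂).d (h + 1) h w :=
    (hex h _).1 (by
      have := congr($(((tensorComplex P).map S.g).comm (h + 1) h).hom w)
      simpa using this.symm.trans hz)
  let T := tensorComplex P
  let m := (ComplexShape.down ℕ).next h
  let s := tensorHomotopy P H S.X₂
  have hda : (T.obj S.X₁).d h m a = 0 := by
    apply hinj m
    have h1 := congr($((T.map S.f).comm h m).hom a)
    have h2 := congr($((T.obj S.X₂).d_comp_d (h + 1) h m).hom w)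
    rw [map_zero]
    refine h1.symm.trans ?_
    refine (congrArg ((T.obj S.X₂).d h m) ha).trans h2
  let b := (T.map ι).f h a
  have hdb : (T.obj S.X₂).d h m b = 0 := by
    refine congr($((T.map ι).comm h m).hom a).trans ?_
    exact (congrArg ((T.map ι).f m) hda).trans (map_zero _)
  have hsb : (T.obj S.X₂).d (h + 1) h (s.hom h (h + 1) b) = (T.obj S.X₂).d (h + 1) h w := by
    rw [← ha]
    have h1 := congr($(s.comm h).hom b)
    rw [Homotopy.prevD_chainComplex] at h1
    have h2 : (T.map (g • 𝟙 S.X₂)).f h b = (T.map S.f).f h a := by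
      have : S.f = ι ≫ (g • 𝟙 S.X₂) := by simp [hι]
      rw [this, T.map_comp]
      rfl
    rw [← h2]
    refine Eq.trans ?_ h1.symm
    have h3 : dNext h s.hom b = 0 := by
      change s.hom m h ((T.obj S.X₂).d h m b) = 0
      rw [hdb, map_zero]
    change _ = (dNext h s.hom b + _) + 0
    rw [h3, zero_add, add_zero]
    rfl
  have hρb : (T.map ρ).f (h + 1) (s.hom h (h + 1) b) = 0 := by
    refine congr($(tensorHomotopy_hom_naturality P H ρ h (h + 1)).hom b).trans ?_
    have h1 : (T.map ρ).f h b = 0 := by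
      have : (T.map ι).f h ≫ (T.map ρ).f h = 0 := by
        rw [← comp_f, ← T.map_comp, hιρ, T.map_zero, zero_f]
      exact congr($(this).hom a)
    exact (congrArg ((tensorHomotopy P H D).hom h (h + 1)) h1).trans (map_zero _)
  obtain ⟨v, hv⟩ := hρ (w - s.hom h (h + 1) b) (by
    rw [map_sub]
    exact sub_eq_zero.2 hsb.symm)
  rw [map_sub] at hv
  have hv' : ((tensorComplex P).obj D).d (h + 1 + 1) (h + 1) v = (T.map ρ).f (h + 1) w :=
    hv.trans (by rw [hρb, sub_zero])
  refine ⟨(T.map σ).f _ v, ?_⟩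
  refine congr($((T.map σ).comm (h + 1 + 1) (h + 1)).hom v).trans ?_
  refine (congrArg ((T.map σ).f (h + 1)) hv').trans ?_
  have : (T.map ρ).f (h + 1) ≫ (T.map σ).f (h + 1) =
      (T.map S.g).f (h + 1) ≫ (T.map τ).f (h + 1) := by
    rw [← comp_f, ← comp_f, ← T.map_comp, ← T.map_comp, hcomm]
  exact congr($(this).hom w)

section Ideals

/-- The projection `R ⧸ I ⟶ R ⧸ J` for `I ≤ J`. -/
noncomputable abbrev quotientProjection {I J : Ideal R} (h : I ≤ J) :
    ModuleCat.of R (R ⧸ I) ⟶ ModuleCat.of R (R ⧸ J) :=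
  ModuleCat.ofHom (Submodule.factor h)

lemma quotientProjection_comp {I J L : Ideal R} (h : I ≤ J) (h' : J ≤ L) :
    quotientProjection h ≫ quotientProjection h' = quotientProjection (h.trans h') := by
  ext
  rfl

/-- The sequence `0 → J/I → R/I → R/I' → 0` whose first map is multiplication by `g`. -/
noncomputable def mulShortComplex {I J I' : Ideal R} (hIJ : I ≤ J) (g : R)
    (hI' : I' = I ⊔ Ideal.span {g} * J) : ShortComplex (ModuleCat.{0} R) where
  X₁ := ModuleCat.of R (LinearMap.ker (Submodule.factor hIJ))
  X₂ := ModuleCat.of R (R ⧸ I)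
  X₃ := ModuleCat.of R (R ⧸ I')
  f := g • ModuleCat.ofHom (LinearMap.ker (Submodule.factor hIJ)).subtype
  g := quotientProjection (hI' ▸ le_sup_left)
  zero := by
    ext ⟨x, hx⟩
    obtain ⟨x, rfl⟩ := Ideal.Quotient.mk_surjective x
    have hx' : x ∈ J := Ideal.Quotient.eq_zero_iff_mem.1 hx
    refine Ideal.Quotient.eq_zero_iff_mem (a := g * x).2 ?_
    rw [hI']
    exact Ideal.mem_sup_right (Ideal.mul_mem_mul (Ideal.mem_span_singleton_self g) hx')

lemma mulShortComplex_shortExact {I J I' : Ideal R} (hIJ : I ≤ J) (g : R)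
    (hI' : I' = I ⊔ Ideal.span {g} * J) (hreg : ∀ x, g * x ∈ I → x ∈ I) :
    (mulShortComplex hIJ g hI').ShortExact := by
  apply ModuleCat.shortComplex_shortExact
  · intro y
    constructor
    · obtain ⟨y, rfl⟩ := Ideal.Quotient.mk_surjective y
      intro hy
      have hy' : y ∈ I' := Ideal.Quotient.eq_zero_iff_mem.1 hy
      rw [hI'] at hy'
      obtain ⟨a, ha, b, hb, rfl⟩ := Submodule.mem_sup.1 hy'
      obtain ⟨c, hc, rfl⟩ := Ideal.mem_span_singleton_mul.1 hb
      refine ⟨⟨Ideal.Quotient.mk I c, Ideal.Quotient.eq_zero_iff_mem.2 hc⟩, ?_⟩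
      refine (Ideal.Quotient.eq (x := g * c) (y := a + g * c)).2 ?_
      simpa using ha
    · rintro ⟨x, rfl⟩
      exact congr($((mulShortComplex hIJ g hI').zero).hom x)
  · refine (injective_iff_map_eq_zero (mulShortComplex hIJ g hI').f.hom).2 ?_
    rintro ⟨x, hx⟩ h
    obtain ⟨x, rfl⟩ := Ideal.Quotient.mk_surjective x
    have : g * x ∈ I := Ideal.Quotient.eq_zero_iff_mem.1 h
    exact Subtype.ext (Ideal.Quotient.eq_zero_iff_mem.2 (hreg x this))
  · exact Submodule.factor_surjective (hI' ▸ le_sup_left)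

/-- The sequence `0 → R/J → R/J → R/J' → 0` whose first map is multiplication by `g`. -/
noncomputable def smulShortComplex {J J' : Ideal R} (g : R)
    (hJ' : J' = J ⊔ Ideal.span {g}) : ShortComplex (ModuleCat.{0} R) where
  X₁ := ModuleCat.of R (R ⧸ J)
  X₂ := ModuleCat.of R (R ⧸ J)
  X₃ := ModuleCat.of R (R ⧸ J')
  f := g • 𝟙 _
  g := quotientProjection (hJ' ▸ le_sup_left)
  zero := by
    apply ModuleCat.hom_ext
    ext
    refine Ideal.Quotient.eq_zero_iff_mem (a := g * 1).2 ?_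
    rw [hJ', mul_one]
    exact Ideal.mem_sup_right (Ideal.mem_span_singleton_self g)

lemma smulShortComplex_shortExact {J J' : Ideal R} (g : R)
    (hJ' : J' = J ⊔ Ideal.span {g}) (hreg : ∀ x, g * x ∈ J → x ∈ J) :
    (smulShortComplex g hJ').ShortExact := by
  apply ModuleCat.shortComplex_shortExact
  · intro y
    constructor
    · obtain ⟨y, rfl⟩ := Ideal.Quotient.mk_surjective y
      intro hy
      have hy' : y ∈ J' := Ideal.Quotient.eq_zero_iff_mem.1 hy
      rw [hJ'] at hy'
      obtain ⟨a, ha, b, hb, rfl⟩ := Submodule.mem_sup.1 hy'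
      obtain ⟨c, rfl⟩ := Ideal.mem_span_singleton.1 hb
      refine ⟨Ideal.Quotient.mk J c, ?_⟩
      refine (Ideal.Quotient.eq (x := g * c) (y := a + g * c)).2 ?_
      simpa using ha
    · rintro ⟨x, rfl⟩
      exact congr($((smulShortComplex g hJ').zero).hom x)
  · refine (injective_iff_map_eq_zero (smulShortComplex g hJ').f.hom).2 ?_
    intro x h
    obtain ⟨x, rfl⟩ := Ideal.Quotient.mk_surjective x
    have : g * x ∈ J := Ideal.Quotient.eq_zero_iff_mem.1 h
    exact Ideal.Quotient.eq_zero_iff_mem.2 (hreg x this)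
  · exact Submodule.factor_surjective (hJ' ▸ le_sup_left)

/-- The Tor lengths of `R/J` and `R/I` are those of the ideals generated by `n` elements of a
regular sequence and by their pairwise products, and `R/I → R/J` is zero on higher Tor. -/
structure HasGridTor (n : ℕ) (I J : Ideal R) : Prop where
  le : I ≤ J
  length_right : ∀ h, torLength P h (ModuleCat.of R (R ⧸ J)) = n.choose h
  length_left_zero : torLength P 0 (ModuleCat.of R (R ⧸ I)) = 1
  length_left_succ : ∀ h, torLength P (h + 1) (ModuleCat.of R (R ⧸ I)) =
    ((h + 1) * n.choose (h + 2) : ℕ)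
  torMap_succ : ∀ h, torMap P (h + 1) (quotientProjection le) = 0

variable {P} in
lemma HasGridTor.succ [∀ i, Module.Flat R (P.X i)] {n : ℕ} {I J I' J' : Ideal R}
    (hn : HasGridTor P n I J) {g : R} (H : Homotopy (g • 𝟙 P) 0)
    (hI : ∀ x, g * x ∈ I → x ∈ I) (hJ : ∀ x, g * x ∈ J → x ∈ J)
    (hI' : I' = I ⊔ Ideal.span {g} * J) (hJ' : J' = J ⊔ Ideal.span {g}) :
    HasGridTor P (n + 1) I' J' := by
  have le : I' ≤ J' := by
    rw [hI', hJ']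
    exact sup_le_sup hn.le Ideal.mul_le_left
  have exI := mulShortComplex_shortExact hn.le g hI' hI
  have exJ := smulShortComplex_shortExact g hJ' hJ
  have exK := LinearMap.shortExact_shortComplexKer (Submodule.factor_surjective hn.le)
  have lenJ0 := torLength_zero_of_torMap_f_eq_zero P exJ (torMap_smul_eq_zero P H 0 _)
  have lenJ := torLength_succ_of_torMap_f_eq_zero P exJ fun h ↦ torMap_smul_eq_zero P H h _
  have lenI0 := torLength_zero_of_torMap_f_eq_zero P exI (torMap_smul_eq_zero P H 0 _)
  have lenI := torLength_succ_of_torMap_f_eq_zero P exI fun h ↦ torMap_smul_eq_zero P H h _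
  have lenK (h : ℕ) : torLength P h (ModuleCat.of R (LinearMap.ker (Submodule.factor hn.le))) =
      ((h + 1) * n.choose (h + 1) : ℕ) := by
    have key := torLength_left_of_torMap_g_eq_zero P exK h (hn.torMap_succ h)
    refine key.trans ?_
    have hr : torLength P (h + 1) (Submodule.factor hn.le).shortComplexKer.X₃ = _ :=
      hn.length_right (h + 1)
    rw [hr]
    cases h with
    | zero =>
      have h1 := Module.length_eq_add_of_exact
        (LinearMap.ker (torMap P 0 (quotientProjection hn.le)).hom).subtype
        (torMap P 0 (quotientProjection hn.le)).hom (Submodule.subtype_injective _)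
        (torMap_zero_surjective P _ (Submodule.factor_surjective hn.le))
        (LinearMap.exact_subtype_ker_map _)
      have h2 : _ = (1 : ℕ∞) := hn.length_left_zero
      have h3 := hn.length_right 0
      simp only [torLength] at h2 h3
      rw [h2, h3] at h1
      have h4 :
          Module.length R (LinearMap.ker (torMap P 0 (quotientProjection hn.le)).hom) = 0 := by
        simpa using h1.symm
      refine (congrArg _ h4).trans ?_
      simp
    | succ h =>
      have h0 : LinearMap.ker (torMap P (h + 1) (quotientProjection hn.le)).hom = ⊤ := by
        rw [hn.torMap_succ h]
        simp
      have h1 : Module.length R (LinearMap.ker (torMap P (h + 1) (quotientProjection hn.le)).hom) =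
          ((h + 1) * n.choose (h + 2) : ℕ) := by
        rw [h0, Module.length_top]
        exact hn.length_left_succ h
      refine (congrArg _ h1).trans ?_
      norm_cast
      ring
  refine ⟨le, ?_, lenI0.trans hn.length_left_zero, ?_, ?_⟩
  · rintro (_ | h)
    · exact lenJ0.trans ((hn.length_right 0).trans (by simp))
    · refine (lenJ h).trans ?_
      refine (congr_arg₂ (· + ·) (hn.length_right (h + 1)) (hn.length_right h)).trans ?_
      norm_cast
      rw [Nat.choose_succ_succ, add_comm]
  · intro h
    refine (lenI h).trans ((congr_arg₂ (· + ·) (hn.length_left_succ h) (lenK h)).trans ?_)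
    norm_cast
    rw [Nat.choose_succ_succ n (h + 1)]
    ring
  · intro h
    refine torMap_succ_eq_zero_of_shortExact P exI H (ρ := quotientProjection hn.le)
      (σ := quotientProjection (hJ' ▸ le_sup_left)) rfl ?_ ?_ h (hn.torMap_succ h)
    · ext ⟨x, hx⟩
      exact hx
    · exact (quotientProjection_comp _ _).trans (quotientProjection_comp _ _).symm

end Ideals

end Homological

section Resolution

variable {R : Type} [CommRing R] {N : ModuleCat.{0} R} (Q : ProjectiveResolution N)

instance (i : ℕ) : Module.Flat R (Q.complex.X i) := by
  have : Module.Projective R (Q.complex.X i) :=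
    (IsProjective.iff_projective (Q.complex.X i)).2 (Q.projective i)
  infer_instance

/-- An element annihilating `N` acts on a projective resolution by a null-homotopic map. -/
noncomputable def smulHomotopy {g : R} (hg : ∀ x : N, g • x = 0) : Homotopy (g • 𝟙 Q.complex) 0 :=
  ProjectiveResolution.liftHomotopyZero (P := Q) (Q := Q) (g • 𝟙 Q.complex) (by
    ext x
    exact (map_smul (Q.π.f 0).hom g x).trans (hg (Q.π.f 0 x)))

lemma hasGridTor_zero (hN : Module.length R N = 1) :
    HasGridTor Q.complex 0 (⊥ : Ideal R) ⊥ := by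
  let e₀ : ModuleCat.of R (R ⧸ (⊥ : Ideal R)) ≅
      MonoidalCategoryStruct.tensorUnit (ModuleCat.{0} R) :=
    (AlgEquiv.quotientBot R R).toLinearEquiv.toModuleIso
  have e : (tensorComplex Q.complex).obj (ModuleCat.of R (R ⧸ (⊥ : Ideal R))) ≅ Q.complex :=
    ((tensorComplex Q.complex).mapIso e₀) ≪≫
    HomologicalComplex.Hom.isoOfComponents
      (fun i => MonoidalCategory.leftUnitor (C := ModuleCat.{0} R) (Q.complex.X i))
      (fun i j _ => (MonoidalCategory.leftUnitor_naturality _).symm)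
  have h0 : torLength Q.complex 0 (ModuleCat.of R (R ⧸ (⊥ : Ideal R))) = 1 := by
    rw [← hN]
    exact ((HomologicalComplex.homologyMapIso e 0) ≪≫
      asIso (HomologicalComplex.homologyMap Q.π 0) ≪≫
      HomologicalComplex.singleObjHomologySelfIso _ _ _).toLinearEquiv.length_eq
  have hs (h : ℕ) : Subsingleton (((tensorComplex Q.complex).obj
      (ModuleCat.of R (R ⧸ (⊥ : Ideal R)))).homology (h + 1)) := by
    have : Subsingleton (Q.complex.homology (h + 1)) :=
      ModuleCat.subsingleton_of_isZero (Q.complex_exactAt_succ h).isZero_homology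
    exact (HomologicalComplex.homologyMapIso e (h + 1)).toLinearEquiv.toEquiv.subsingleton
  refine ⟨le_rfl, ?_, h0, ?_, ?_⟩
  · rintro (_ | h)
    · simp [h0]
    · simp [torLength]
  · intro h
    simp [torLength]
  · intro h
    ext x
    exact (hs h).elim _ _

end Resolution

lemma Module.rank_eq_of_length_eq {K R : Type} [Field K] [CommRing R] [Algebra K R]
    {M : Type} [AddCommGroup M] [Module R M] [Module K M] [IsScalarTower K R M] (I : Ideal R)
    (hI : ∀ g ∈ I, ∀ x : M, g • x = 0)
    (hK : Function.Surjective (algebraMap K (R ⧸ I))) {d : ℕ} (h : Module.length R M = d) :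
    Module.rank K M = d := by
  let : Module (R ⧸ I) M := Module.IsTorsionBySet.module (I := I) fun x g ↦ hI g g.2 x
  have : IsScalarTower R (R ⧸ I) M := Module.IsTorsionBySet.isScalarTower (S := R) _
  have : IsScalarTower K (R ⧸ I) M := Module.IsTorsionBySet.isScalarTower (S := K) _
  rw [Module.length_eq_of_surjective (R := R ⧸ I) Ideal.Quotient.mk_surjective,
    ← Module.length_eq_of_surjective (S := K) hK, Module.length_eq_rank] at h
  simpa using h

lemma algebraMap_quotient_span_X_surjective (K σ : Type) [Field K] : Function.Surjective
    (algebraMap K (MvPolynomial σ K ⧸ Ideal.span (Set.range (X : σ → MvPolynomial σ K)))) := by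
  intro y
  obtain ⟨p, rfl⟩ := Ideal.Quotient.mk_surjective y
  induction p using MvPolynomial.induction_on with
  | C a => exact ⟨a, rfl⟩
  | add p q hp hq =>
    obtain ⟨a, ha⟩ := hp
    obtain ⟨b, hb⟩ := hq
    exact ⟨a + b, by rw [map_add, map_add, ha, hb]⟩
  | mul_X p i _ =>
    refine ⟨0, ?_⟩
    rw [map_zero, map_mul,
      Ideal.Quotient.eq_zero_iff_mem.2 (Ideal.subset_span (Set.mem_range_self i)), mul_zero]

lemma length_quotient_span_X (K σ : Type) [Field K] : Module.length (MvPolynomial σ K)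
    (MvPolynomial σ K ⧸ Ideal.span (Set.range (X : σ → MvPolynomial σ K))) = 1 := by
  have hK := algebraMap_quotient_span_X_surjective K σ
  set I := Ideal.span (Set.range (X : σ → MvPolynomial σ K)) with hI
  have hne : I ≠ ⊤ := by
    intro h
    have h1 : I ≤ RingHom.ker (constantCoeff (σ := σ) (R := K)) := by
      rw [hI, Ideal.span_le]
      rintro _ ⟨i, rfl⟩
      simp
    have h2 := h1 (h ▸ Submodule.mem_top : (1 : MvPolynomial σ K) ∈ I)
    simp at h2
  have : Nontrivial (MvPolynomial σ K ⧸ I) := Ideal.Quotient.nontrivial_iff.2 hne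
  rw [Module.length_eq_of_surjective (R := MvPolynomial σ K ⧸ I) Ideal.Quotient.mk_surjective,
    ← Module.length_eq_of_surjective (S := K) hK]
  rw [(LinearEquiv.ofBijective (Algebra.linearMap K (MvPolynomial σ K ⧸ I))
    ⟨(algebraMap K (MvPolynomial σ K ⧸ I)).injective, hK⟩).symm.length_eq, Module.length_eq_finrank]
  simp

lemma kdim_torModule_of_hasGridTor (K : Type) [Field K] (m : ℕ) {n : ℕ}
    {Q : ProjectiveResolution (ModuleCat.of _ (MvPolynomial (Fin m) K ⧸
      Ideal.span (Set.range (X : Fin m → MvPolynomial (Fin m) K))))}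
    {I J : Ideal (MvPolynomial (Fin m) K)} (H : HasGridTor Q.complex n I J) (h : ℕ) :
    kdim K _ (torModule K m I (h + 1)) = ((h + 1) * n.choose (h + 2) : ℕ) := by
  let T := (tensorComplex Q.complex).obj (ModuleCat.of _ (MvPolynomial (Fin m) K ⧸ I))
  let e : torModule K m I (h + 1) ≅ T.homology (h + 1) :=
    Q.isoLeftDerivedObj ((MonoidalCategory.tensoringLeft _).obj _) (h + 1)
  let : Module K (torModule K m I (h + 1)) :=
    Module.compHom _ (algebraMap K (MvPolynomial (Fin m) K))
  have : IsScalarTower K (MvPolynomial (Fin m) K) (torModule K m I (h + 1)) :=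
    ⟨fun a b x ↦ by
      rw [Algebra.smul_def, mul_smul]
      rfl⟩
  refine Module.rank_eq_of_length_eq _ (fun g hg x ↦ ?_)
    (algebraMap_quotient_span_X_surjective K (Fin m))
    (e.toLinearEquiv.length_eq.trans (H.length_left_succ h))
  have hg' : torMap Q.complex (h + 1) (g • 𝟙 (ModuleCat.of _ (MvPolynomial (Fin m) K ⧸ I))) = 0 :=
    torMap_smul_eq_zero _ (smulHomotopy Q fun y ↦ by
      obtain ⟨y, rfl⟩ := Ideal.Quotient.mk_surjective y
      exact Ideal.Quotient.eq_zero_iff_mem.2 (Ideal.mul_mem_right y _ hg)) _ _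
  apply e.toLinearEquiv.injective
  rw [map_smul, map_zero]
  rw [torMap_smul_id] at hg'
  exact congr($hg' (e.toLinearEquiv x))

section Regularity

variable {R : Type*} [CommRing R]

lemma mem_sup_mul_of_mul_mem {N J : Ideal R} {x g : R}
    (hx : ∀ u, x * u ∈ N ⊔ Ideal.span {g} → u ∈ N ⊔ Ideal.span {g})
    (hg : ∀ u, g * u ∈ N → u ∈ N) (hJ : ∀ u, x * u ∈ N ⊔ J → u ∈ N ⊔ J) {u : R}
    (hu : x * u ∈ N ⊔ Ideal.span {g} * J) : u ∈ N ⊔ Ideal.span {g} * J := by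
  obtain ⟨a, ha, b, hb, rfl⟩ := Submodule.mem_sup.1 (hx u (sup_le_sup_left Ideal.mul_le_left N hu))
  obtain ⟨v, rfl⟩ := Ideal.mem_span_singleton.1 hb
  obtain ⟨d, hd, e, he, hde⟩ := Submodule.mem_sup.1 hu
  obtain ⟨w, hw, rfl⟩ := Ideal.mem_span_singleton_mul.1 he
  have h1 : x * v - w ∈ N := by
    apply hg
    have h2 : g * (x * v - w) = d - x * a := by linear_combination -hde
    rw [h2]
    exact N.sub_mem hd (N.mul_mem_left x ha)
  have h3 : v ∈ N ⊔ J := hJ v (Submodule.mem_sup.2 ⟨_, h1, w, hw, by ring⟩)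
  obtain ⟨p, hp, q, hq, rfl⟩ := Submodule.mem_sup.1 h3
  exact Submodule.mem_sup.2 ⟨a + g * p, N.add_mem ha (N.mul_mem_left g hp), g * q,
    Ideal.mul_mem_mul (Ideal.mem_span_singleton_self g) hq, by ring⟩

/-- The ideal generated by the products `f i * f j` with `i < j < m`. -/
def pairIdeal (f : ℕ → R) : ℕ → Ideal R
  | 0 => ⊥
  | m + 1 => pairIdeal f m ⊔ Ideal.span {f m} * Ideal.span (f '' Set.Iio m)

lemma span_image_insert {ι : Type*} (f : ι → R) (m : ι) (B : Set ι) :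
    Ideal.span (f '' insert m B) = Ideal.span {f m} ⊔ Ideal.span (f '' B) := by
  rw [Set.image_insert_eq, Ideal.span_insert]

lemma span_image_Iio_succ (f : ℕ → R) (m : ℕ) :
    Ideal.span (f '' Set.Iio (m + 1)) = Ideal.span (f '' Set.Iio m) ⊔ Ideal.span {f m} := by
  rw [← Order.succ_eq_add_one, Order.Iio_succ_eq_insert, span_image_insert, sup_comm]

lemma pairIdeal_le (f : ℕ → R) (m : ℕ) : pairIdeal f m ≤ Ideal.span (f '' Set.Iio m) := by
  induction m with
  | zero => exact bot_le
  | succ m ih =>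
    rw [span_image_Iio_succ]
    exact sup_le_sup ih Ideal.mul_le_left

lemma pairIdeal_eq_span (f : ℕ → R) (m : ℕ) :
    pairIdeal f m = Ideal.span {g | ∃ i j, i < j ∧ j < m ∧ g = f i * f j} := by
  induction m with
  | zero => simp [pairIdeal]
  | succ m ih =>
    rw [pairIdeal, ih, Ideal.span_mul_span', ← Ideal.span_union]
    congr 1
    ext g
    simp only [Set.mem_union, Set.mem_ofPred_eq, Set.singleton_mul, Set.mem_image, Set.mem_Iio,
      exists_exists_and_eq_and]
    constructor
    · rintro (⟨i, j, hij, hj, rfl⟩ | ⟨i, hi, rfl⟩)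
      · exact ⟨i, j, hij, by lia, rfl⟩
      · exact ⟨i, m, hi, by lia, mul_comm _ _⟩
    · rintro ⟨i, j, hij, hj, rfl⟩
      rcases Nat.lt_succ_iff_lt_or_eq.1 hj with h | rfl
      · exact .inl ⟨i, j, hij, h, rfl⟩
      · exact .inr ⟨i, hij, mul_comm _ _⟩

lemma mem_pairIdeal_sup_of_mul_mem {f : ℕ → R} {n : ℕ}
    (hf : ∀ B ⊆ Set.Iio n, ∀ j < n, j ∉ B → ∀ x, f j * x ∈ Ideal.span (f '' B) →
      x ∈ Ideal.span (f '' B)) (m : ℕ) :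
    ∀ B ⊆ Set.Ico m n, ∀ j ∈ Set.Ico m n, j ∉ B → ∀ x,
      f j * x ∈ pairIdeal f m ⊔ Ideal.span (f '' B) → x ∈ pairIdeal f m ⊔ Ideal.span (f '' B) := by
  induction m with
  | zero =>
    intro B hB j hj hjB x hx
    rw [pairIdeal, bot_sup_eq] at hx ⊢
    exact hf B (fun b hb ↦ (hB hb).2) j hj.2 hjB x hx
  | succ m ih =>
    intro B hB j hj hjB x hx
    have hmn : m < n := by have := hj.1; have := hj.2; lia
    have hmB : m ∉ B := fun h ↦ by have := (hB h).1; lia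
    have hB' : B ⊆ Set.Ico m n := fun b hb ↦ ⟨by have := (hB hb).1; lia, (hB hb).2⟩
    have hj' : j ∈ Set.Ico m n := ⟨by have := hj.1; lia, hj.2⟩
    rw [pairIdeal, sup_right_comm] at hx ⊢
    refine mem_sup_mul_of_mul_mem ?_ (ih B hB' m ⟨le_rfl, hmn⟩ hmB) ?_ hx
    · rw [sup_assoc, sup_comm (Ideal.span (f '' B)), ← span_image_insert]
      refine ih _ (Set.insert_subset ⟨le_rfl, hmn⟩ hB') j hj' ?_
      rw [Set.mem_insert_iff, not_or]
      exact ⟨by have := hj.1; lia, hjB⟩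
    · have : pairIdeal f m ⊔ Ideal.span (f '' B) ⊔ Ideal.span (f '' Set.Iio m) =
          Ideal.span (f '' (B ∪ Set.Iio m)) := by
        rw [Set.image_union, Ideal.span_union, sup_right_comm, sup_eq_right.2 (pairIdeal_le f m),
          sup_comm]
      rw [this]
      refine hf _ (Set.union_subset (fun b hb ↦ (hB hb).2) fun b hb ↦ lt_trans hb hmn) j hj.2 ?_
      rintro (h | h)
      · exact hjB h
      · have := hj.1
        have : j < m := h
        lia

variable {ι : Type*} {κ : ι → Type*} [∀ j, Fintype (κ j)] {L : ∀ j, κ j → R}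

lemma mem_span_prod_sup_of_mul_mem [DecidableEq ι]
    (hL : ∀ (c : ∀ j, κ j) (C : Set ι), ∀ j ∉ C, ∀ x,
      L j (c j) * x ∈ Ideal.span ((fun i ↦ L i (c i)) '' C) →
        x ∈ Ideal.span ((fun i ↦ L i (c i)) '' C)) (B : Finset ι) :
    ∀ (c : ∀ j, κ j) (C : Set ι), Disjoint (B : Set ι) C → ∀ j ∉ B, j ∉ C → ∀ x,
      L j (c j) * x ∈ Ideal.span ((fun i ↦ ∏ k, L i k) '' (B : Set ι)) ⊔
        Ideal.span ((fun i ↦ L i (c i)) '' C) →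
      x ∈ Ideal.span ((fun i ↦ ∏ k, L i k) '' (B : Set ι)) ⊔
        Ideal.span ((fun i ↦ L i (c i)) '' C) := by
  induction B using Finset.induction_on with
  | empty =>
    intro c C _ j _ hj x
    simpa using hL c C j hj x
  | insert b B hb ih =>
    intro c C hBC j hjB hjC
    rw [Finset.coe_insert, Set.disjoint_insert_left] at hBC
    rw [Finset.mem_insert, not_or] at hjB
    rw [Finset.coe_insert, span_image_insert, sup_assoc, sup_comm]
    generalize hN : Ideal.span ((fun i ↦ ∏ k, L i k) '' (B : Set ι)) ⊔
      Ideal.span ((fun i ↦ L i (c i)) '' C) = N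
    have key (i : κ b) : (fun a ↦ L a (Function.update c b i a)) '' C =
        (fun a ↦ L a (c a)) '' C := by
      refine Set.image_congr fun a ha ↦ ?_
      have hab : a ≠ b := fun h ↦ hBC.1 (h ▸ ha)
      simp only [Function.update_of_ne hab]
    have main (s : Finset (κ b)) : ∀ x, L j (c j) * x ∈ N ⊔ Ideal.span {∏ k ∈ s, L b k} →
        x ∈ N ⊔ Ideal.span {∏ k ∈ s, L b k} := by
      classical
      induction s using Finset.induction_on with
      | empty => simp
      | insert i s hi ihs =>
        intro x hx
        rw [Finset.prod_insert hi, ← Ideal.span_singleton_mul_span_singleton] at hx ⊢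
        refine mem_sup_mul_of_mul_mem ?_ ?_ ihs hx
        · have h := ih (Function.update c b i) (insert b C)
            (Set.disjoint_insert_right.2 ⟨by simpa using hb, hBC.2⟩) j hjB.2
            (by rw [Set.mem_insert_iff, not_or]; exact ⟨hjB.1, hjC⟩)
          rw [span_image_insert, key, sup_left_comm, hN, sup_comm, Function.update_self,
            Function.update_of_ne hjB.1] at h
          exact h
        · have h := ih (Function.update c b i) C hBC.2 b hb hBC.1
          rw [key, hN, Function.update_self] at h
          exact h
    exact main Finset.univ

lemma mem_span_prod_of_prod_mul_mem [DecidableEq ι] [∀ j, Nonempty (κ j)]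
    (hL : ∀ (c : ∀ j, κ j) (C : Set ι), ∀ j ∉ C, ∀ x,
      L j (c j) * x ∈ Ideal.span ((fun i ↦ L i (c i)) '' C) →
        x ∈ Ideal.span ((fun i ↦ L i (c i)) '' C)) (B : Finset ι) {j : ι} (hj : j ∉ B) {x : R}
    (hx : (∏ k, L j k) * x ∈ Ideal.span ((fun i ↦ ∏ k, L i k) '' (B : Set ι))) :
    x ∈ Ideal.span ((fun i ↦ ∏ k, L i k) '' (B : Set ι)) := by
  classical
  have hreg (k : κ j) (y : R) (hy : L j k * y ∈ Ideal.span ((fun i ↦ ∏ k, L i k) '' (B : Set ι))) :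
      y ∈ Ideal.span ((fun i ↦ ∏ k, L i k) '' (B : Set ι)) := by
    have h := mem_span_prod_sup_of_mul_mem hL B
      (Function.update (fun _ ↦ Classical.arbitrary _) j k) ∅ (Set.disjoint_empty _) j hj
      (by simp) y
    rw [Function.update_self, Set.image_empty, Ideal.span_empty, sup_bot_eq] at h
    exact h hy
  have main (s : Finset (κ j)) : (∏ k ∈ s, L j k) * x ∈
      Ideal.span ((fun i ↦ ∏ k, L i k) '' (B : Set ι)) →
        x ∈ Ideal.span ((fun i ↦ ∏ k, L i k) '' (B : Set ι)) := by
    induction s using Finset.induction_on with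
    | empty => simp
    | insert i s hi ih =>
      intro h
      rw [Finset.prod_insert hi, mul_assoc] at h
      exact ih (hreg i _ h)
  exact main _ hx

end Regularity

section LinearForms

lemma RingHom.injective_of_surjective_of_isNoetherianRing {R : Type*} [CommRing R]
    [IsNoetherianRing R] (f : R →+* R) (hf : Function.Surjective f) : Function.Injective f := by
  obtain ⟨k, hk⟩ := monotone_stabilizes_iff_noetherian.2 ‹IsNoetherianRing R›
    ⟨fun k ↦ RingHom.ker (f ^ k), monotone_nat_of_le_succ fun k x hx ↦ by
      rw [RingHom.mem_ker] at hx ⊢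
      rw [pow_succ', RingHom.mul_def, RingHom.comp_apply, hx, map_zero]⟩
  rw [injective_iff_map_eq_zero]
  intro x hx
  obtain ⟨y, rfl⟩ : ∃ y, (f ^ k) y = x := by
    rw [RingHom.coe_pow]
    exact hf.iterate k x
  have hy : y ∈ RingHom.ker (f ^ (k + 1)) := by
    rwa [RingHom.mem_ker, pow_succ', RingHom.mul_def, RingHom.comp_apply]
  have h : RingHom.ker (f ^ k) = RingHom.ker (f ^ (k + 1)) := hk (k + 1) (Nat.le_succ k)
  rwa [← h, RingHom.mem_ker] at hy

instance MvPolynomial.finite_homogeneousSubmodule_one {K σ : Type*} [Field K] [Finite σ] :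
    Module.Finite K (homogeneousSubmodule σ K 1) := by
  rw [homogeneousSubmodule_one_eq_span_X]
  exact FiniteDimensional.span_of_finite K (Set.finite_range X)

lemma MvPolynomial.mem_span_X_of_X_mul_mem {σ K : Type*} [Field K] {C : Set σ} {j : σ} (hj : j ∉ C)
    {x : MvPolynomial σ K} (hx : X j * x ∈ Ideal.span (X '' C)) : x ∈ Ideal.span (X '' C) := by
  rw [mem_ideal_span_X_image] at hx ⊢
  intro m hm
  obtain ⟨i, hi, h⟩ := hx (Finsupp.single j 1 + m) (by
    rw [mem_support_iff] at hm ⊢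
    rwa [coeff_X_mul])
  refine ⟨i, hi, ?_⟩
  have hij : j ≠ i := fun h ↦ hj (h ▸ hi)
  simpa [Finsupp.single_apply, hij] using h

lemma MvPolynomial.exists_algEquiv_X_eq {K : Type*} [Field K] {n : ℕ}
    {b : Fin n → MvPolynomial (Fin n) K} (hb : ∀ j, (b j).IsHomogeneous 1)
    (hli : LinearIndependent K b) :
    ∃ e : MvPolynomial (Fin n) K ≃ₐ[K] MvPolynomial (Fin n) K, ∀ j, e (X j) = b j := by
  have hspan : Submodule.span K (Set.range b) = homogeneousSubmodule (Fin n) K 1 := by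
    refine Submodule.eq_of_le_of_finrank_le ?_ ?_
    · rw [Submodule.span_le]
      rintro _ ⟨j, rfl⟩
      exact hb j
    · rw [finrank_span_eq_card hli, homogeneousSubmodule_one_eq_span_X]
      exact finrank_range_le_card _
  have hsurj : Function.Surjective (aeval b : MvPolynomial (Fin n) K →ₐ[K] _) := by
    rw [← AlgHom.range_eq_top, eq_top_iff, ← MvPolynomial.adjoin_range_X, Algebra.adjoin_le_iff]
    rintro _ ⟨i, rfl⟩
    have hX : (X i : MvPolynomial (Fin n) K) ∈ Submodule.span K (Set.range b) := by
      rw [hspan]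
      exact isHomogeneous_X K i
    have hle : Submodule.span K (Set.range b) ≤
        Subalgebra.toSubmodule (aeval b : MvPolynomial (Fin n) K →ₐ[K] _).range := by
      rw [Submodule.span_le]
      rintro _ ⟨j, rfl⟩
      exact ⟨X j, aeval_X b j⟩
    exact hle hX
  have hinj : Function.Injective (aeval b : MvPolynomial (Fin n) K →ₐ[K] _) :=
    RingHom.injective_of_surjective_of_isNoetherianRing
      (aeval b : MvPolynomial (Fin n) K →ₐ[K] _).toRingHom hsurj
  exact ⟨AlgEquiv.ofBijective _ ⟨hinj, hsurj⟩, fun j ↦ aeval_X b j⟩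

lemma MvPolynomial.mem_span_image_of_mul_mem {K : Type*} [Field K] {n : ℕ}
    {M : Fin n → MvPolynomial (Fin (n + 1)) K} (hM : ∀ j, (M j).IsHomogeneous 1)
    (hli : LinearIndependent K M) {C : Set (Fin n)} {j : Fin n} (hj : j ∉ C)
    {x : MvPolynomial (Fin (n + 1)) K} (hx : M j * x ∈ Ideal.span (M '' C)) :
    x ∈ Ideal.span (M '' C) := by
  obtain ⟨y, hy, hyli⟩ : ∃ y : MvPolynomial (Fin (n + 1)) K, y.IsHomogeneous 1 ∧
      LinearIndependent K (Fin.cons y M : Fin (n + 1) → _) := by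
    have hlt : ¬ homogeneousSubmodule (Fin (n + 1)) K 1 ≤ Submodule.span K (Set.range M) := by
      intro h
      have hX : LinearIndependent K (X : Fin (n + 1) → MvPolynomial (Fin (n + 1)) K) :=
        linearIndependent_X _ _
      have := FiniteDimensional.span_of_finite K (Set.finite_range M)
      have h1 := Submodule.finrank_mono h
      rw [finrank_span_eq_card hli, homogeneousSubmodule_one_eq_span_X, finrank_span_eq_card hX,
        Fintype.card_fin, Fintype.card_fin] at h1
      lia
    obtain ⟨y, hy, hy'⟩ := SetLike.not_le_iff_exists.1 hlt
    exact ⟨y, hy, linearIndependent_finCons.2 ⟨hli, hy'⟩⟩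
  obtain ⟨e, he⟩ := exists_algEquiv_X_eq (b := Fin.cons y M)
    (Fin.cases hy fun j ↦ by simpa using hM j) hyli
  have hspan : Ideal.span (M '' C) = (Ideal.span (X '' (Fin.succ '' C))).map e := by
    rw [Ideal.map_span, Set.image_image, Set.image_image]
    congr 1
    refine Set.image_congr fun i _ ↦ ?_
    simp [he]
  have hmem (z : MvPolynomial (Fin (n + 1)) K) :
      e z ∈ Ideal.span (M '' C) ↔ z ∈ Ideal.span (X '' (Fin.succ '' C)) := by
    rw [hspan]
    exact (Ideal.mem_map_of_equiv e (e z)).trans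
      ⟨fun ⟨w, hw, h⟩ ↦ by rwa [← e.injective h], fun h ↦ ⟨z, h, rfl⟩⟩
  obtain ⟨z, rfl⟩ := e.surjective x
  have hMj : M j = e (X j.succ) := by simp [he]
  rw [hMj, ← map_mul, hmem] at hx
  rw [hmem]
  exact mem_span_X_of_X_mul_mem (by simpa using hj) hx

end LinearForms

lemma hasGridTor_pairIdeal {R : Type} [CommRing R] {N : ModuleCat.{0} R}
    (Q : ProjectiveResolution N) (hN : Module.length R N = 1) {f : ℕ → R} {n : ℕ}
    (hf : ∀ B ⊆ Set.Iio n, ∀ j < n, j ∉ B → ∀ x, f j * x ∈ Ideal.span (f '' B) →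
      x ∈ Ideal.span (f '' B))
    (hfN : ∀ j < n, ∀ x : N, f j • x = 0) (m : ℕ) (hm : m ≤ n) :
    HasGridTor Q.complex m (pairIdeal f m) (Ideal.span (f '' Set.Iio m)) := by
  induction m with
  | zero => simpa [pairIdeal] using hasGridTor_zero Q hN
  | succ m ih =>
    refine (ih (by lia)).succ (smulHomotopy Q (hfN m hm)) (fun x hx ↦ ?_) (fun x hx ↦ ?_) rfl
      (span_image_Iio_succ f m)
    · simpa using mem_pairIdeal_sup_of_mul_mem hf m ∅ (Set.empty_subset _) m ⟨le_rfl, hm⟩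
        (Set.notMem_empty m) x (by simpa using hx)
    · exact hf (Set.Iio m) (Set.Iio_subset_Iio (by lia)) m hm (lt_irrefl m) x hx

lemma subsingleton_torModule_of_hasGridTor (K : Type) [Field K] (m : ℕ) {n : ℕ}
    {Q : ProjectiveResolution (ModuleCat.of _ (MvPolynomial (Fin m) K ⧸
      Ideal.span (Set.range (X : Fin m → MvPolynomial (Fin m) K))))}
    {I J : Ideal (MvPolynomial (Fin m) K)} (H : HasGridTor Q.complex n I J) {h : ℕ}
    (hn : n ≤ h + 1) : Subsingleton (torModule K m I (h + 1)) := by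
  let e : torModule K m I (h + 1) ≅ _ :=
    Q.isoLeftDerivedObj ((MonoidalCategory.tensoringLeft _).obj _) (h + 1)
  have h1 := e.toLinearEquiv.length_eq.trans (H.length_left_succ h)
  rw [Nat.choose_eq_zero_of_lt (by lia)] at h1
  exact Module.length_eq_zero_iff.1 (by simpa using h1)

lemma MvPolynomial.mem_span_X_of_isHomogeneous_one {K σ : Type*} [Field K]
    {p : MvPolynomial σ K} (hp : p.IsHomogeneous 1) :
    p ∈ Ideal.span (Set.range (X : σ → MvPolynomial σ K)) := by
  rw [← mem_homogeneousSubmodule, homogeneousSubmodule_one_eq_span_X] at hp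
  exact Submodule.span_le_restrictScalars K (MvPolynomial σ K) _ hp

lemma MvPolynomial.mem_span_of_mul_mem_of_linearForms {K : Type*} [Field K] {n : ℕ}
    {κ : Fin n → Type*} [∀ j, Fintype (κ j)] [∀ j, Nonempty (κ j)]
    {L : ∀ j, κ j → MvPolynomial (Fin (n + 1)) K} (hL : ∀ j i, (L j i).IsHomogeneous 1)
    (hα : ∀ c : ∀ j, κ j, LinearIndependent K (fun j ↦ L j (c j)))
    {F : ℕ → MvPolynomial (Fin (n + 1)) K} (hF : ∀ j : Fin n, F j = ∏ i, L j i) (B : Set ℕ)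
    (hB : B ⊆ Set.Iio n) (j : ℕ) (hj : j < n) (hjB : j ∉ B) (x : MvPolynomial (Fin (n + 1)) K)
    (hx : F j * x ∈ Ideal.span (F '' B)) : x ∈ Ideal.span (F '' B) := by
  obtain ⟨B, rfl⟩ : ∃ B' : Finset (Fin n), Fin.val '' (B' : Set (Fin n)) = B :=
    ⟨(Fin.val ⁻¹' B).toFinite.toFinset, by
      rw [Set.Finite.coe_toFinset, Set.image_preimage_eq_iff]
      exact fun b hb ↦ ⟨⟨b, hB hb⟩, rfl⟩⟩
  have hFB : F '' (Fin.val '' (B : Set (Fin n))) = (fun j ↦ ∏ i, L j i) '' (B : Set (Fin n)) := by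
    rw [Set.image_image]
    exact Set.image_congr fun i _ ↦ hF i
  rw [hFB] at hx ⊢
  rw [show F j = _ from hF ⟨j, hj⟩] at hx
  have hjB' : (⟨j, hj⟩ : Fin n) ∉ B := fun h ↦ hjB ⟨_, h, rfl⟩
  exact mem_span_prod_of_prod_mul_mem (L := L)
    (fun c C i hi y hy ↦ mem_span_image_of_mul_mem (fun k ↦ hL k (c k)) (hα c) hi hy) B hjB' hx

/-- For linear forms `L j i` in `R = K[x_0,…,x_n]` satisfying condition
(α), with `f j = ∏ i, L j i` and `I = (f_i f_j : i < j)` the defining ideal of a complete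
grid or pseudo-grid of lines of type `(ℓ_1,…,ℓ_n)`, one has, for `0 ≤ h ≤ n-2`,
`dim_K Tor_{h+1}^R(R/I, R/(x_0,…,x_n)) = (h+1)·C(n,h+2)`, and
`Tor_j^R(R/I, R/(x_0,…,x_n)) = 0` for `j ≥ n`; i.e. the mapping-cone resolution of `I`
with free modules of ranks `(h+1)·C(n,h+2)` is minimal. -/
theorem betti_numbers_of_complete_grid_or_pseudo_grid
    (K : Type) [Field K] [Infinite K] (n : ℕ) (hn : 2 ≤ n)
    (ℓ : Fin n → ℕ) (hℓ : ∀ j, 0 < ℓ j)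
    (L : (j : Fin n) → Fin (ℓ j) → MvPolynomial (Fin (n + 1)) K)
    (hLhom : ∀ j i, (L j i).IsHomogeneous 1)
    (hα : ∀ c : (j : Fin n) → Fin (ℓ j), LinearIndependent K (fun j => L j (c j)))
    (f : Fin n → MvPolynomial (Fin (n + 1)) K)
    (hf : ∀ j, f j = ∏ i : Fin (ℓ j), L j i) :
    (∀ h : ℕ, h ≤ n - 2 →
      kdim K (MvPolynomial (Fin (n + 1)) K)
          (torModule K (n + 1)
            (Ideal.span {g : MvPolynomial (Fin (n + 1)) K |
              ∃ i j : Fin n, i < j ∧ g = f i * f j})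
            (h + 1)) =
        ((h + 1) * Nat.choose n (h + 2) : ℕ)) ∧
    (∀ j : ℕ, n ≤ j →
      Subsingleton
        (torModule K (n + 1)
          (Ideal.span {g : MvPolynomial (Fin (n + 1)) K |
            ∃ i j : Fin n, i < j ∧ g = f i * f j})
          j)) := by
  have : ∀ j, Nonempty (Fin (ℓ j)) := fun j ↦ ⟨⟨0, hℓ j⟩⟩
  obtain rfl : f = fun j ↦ ∏ i, L j i := funext hf
  obtain ⟨F, hF⟩ : ∃ F : ℕ → MvPolynomial (Fin (n + 1)) K, ∀ j : Fin n, F j = ∏ i, L j i :=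
    ⟨fun k ↦ if h : k < n then ∏ i, L ⟨k, h⟩ i else 0, fun j ↦ dif_pos j.2⟩
  have hreg := mem_span_of_mul_mem_of_linearForms hLhom hα hF
  have hI : Ideal.span {g : MvPolynomial (Fin (n + 1)) K | ∃ i j : Fin n, i < j ∧
      g = (∏ k, L i k) * ∏ k, L j k} = pairIdeal F n := by
    rw [pairIdeal_eq_span]
    congr 1
    ext g
    simp only [Set.mem_ofPred_eq, ← hF]
    exact ⟨fun ⟨i, j, hij, h⟩ ↦ ⟨i, j, hij, j.2, h⟩,
      fun ⟨i, j, hij, hj, h⟩ ↦ ⟨⟨i, hij.trans hj⟩, ⟨j, hj⟩, hij, h⟩⟩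
  have H := hasGridTor_pairIdeal (ProjectiveResolution.of (ModuleCat.of _
    (MvPolynomial (Fin (n + 1)) K ⧸
      Ideal.span (Set.range (X : Fin (n + 1) → MvPolynomial (Fin (n + 1)) K)))))
    (length_quotient_span_X K _) hreg (fun j hj x ↦ by
      obtain ⟨x, rfl⟩ := Ideal.Quotient.mk_surjective x
      refine Ideal.Quotient.eq_zero_iff_mem (a := F j * x).2 (Ideal.mul_mem_right x _ ?_)
      rw [show F j = _ from hF ⟨j, hj⟩]
      exact Ideal.mem_of_dvd _ (Finset.dvd_prod_of_mem _ (Finset.mem_univ ⟨0, hℓ _⟩))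
        (mem_span_X_of_isHomogeneous_one (hLhom _ _))) n le_rfl
  rw [hI]
  refine ⟨fun h _ ↦ kdim_torModule_of_hasGridTor K (n + 1) H h, fun j hj ↦ ?_⟩
  obtain ⟨h, rfl⟩ : ∃ h, j = h + 1 := ⟨j - 1, by lia⟩
  exact subsingleton_torModule_of_hasGridTor K (n + 1) H hj
end

section
/- Let S = K[x_1, …, x_n] and P = K[y_1, …, y_n] with n ≥ 2, let ℓ_1, …, ℓ_n and m be positive integers, let Γ = ⋂_{k=1}^n (x_1^{ℓ_1}, …, x_{k−1}^{ℓ_{k−1}}, x_{k+1}^{ℓ_{k+1}}, …, x_n^{ℓ_n})^m and Γ̄ = ⋂_{k=1}^n (y_1, …, y_{k−1}, y_{k+1}, …, y_n)^m. Then for every h ≥ 0, dim_K Tor_h^S(S/Γ, S/(x_1, …, x_n)) = dim_K Tor_h^P(P/Γ̄, P/(y_1, …, y_n)); that is, the total Betti numbers of Γ (and hence of an m-fat complete grid or pseudo-grid of lines in ℙ^n) coincide with those of the m-fat point scheme supported on the n coordinate points of ℙ^{n−1}. -/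
open CategoryTheory MvPolynomial

/-- `dim_K Tor_h^T(T/N, T/𝔪_T)` for `T = K[x_1,…,x_n]` with irrelevant maximal ideal
`𝔪_T`: the `h`-th total Betti number of `T/N`. -/
noncomputable def torBetti (K : Type) [Field K] (n : ℕ)
    (N : Ideal (MvPolynomial (Fin n) K)) (h : ℕ) : Cardinal :=
  kdim K (MvPolynomial (Fin n) K)
    (((Tor (ModuleCat (MvPolynomial (Fin n) K)) h).obj
        (ModuleCat.of _ (MvPolynomial (Fin n) K ⧸ N))).obj
      (ModuleCat.of _ (MvPolynomial (Fin n) K ⧸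
        Ideal.span (Set.range (X : Fin n → MvPolynomial (Fin n) K)))))

universe u

/-- A ring homomorphism `R → S` is free if it makes `S` a free `R`-module. -/
def RingHom.IsFree {R S : Type*} [CommRing R] [CommRing S] (φ : R →+* S) : Prop :=
  letI := φ.toAlgebra
  Module.Free R S

open TensorProduct in
/-- Base change of `R ⧸ I` along `R → S`, tensored with an `S`-module. -/
noncomputable def quotTensorAddEquiv {R S : Type*} [CommRing R] [CommRing S] [Algebra R S]
    (I : Ideal R) (Q : Type*) [AddCommGroup Q] [Module R Q] [Module S Q] [IsScalarTower R S Q] :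
    (S ⧸ I.map (algebraMap R S)) ⊗[S] Q ≃+ (R ⧸ I) ⊗[R] Q :=
  (quotTensorEquivQuotSMul Q (I.map (algebraMap R S))).toAddEquiv.trans <|
    (Submodule.Quotient.restrictScalarsEquiv R
        (I.map (algebraMap R S) • (⊤ : Submodule S Q))).symm.toAddEquiv.trans <|
      (Submodule.quotEquivOfEq _ _
        (by rw [Ideal.smul_restrictScalars, Submodule.restrictScalars_top])).toAddEquiv.trans
          (quotTensorEquivQuotSMul Q I).symm.toAddEquiv

open TensorProduct in
theorem quotTensorAddEquiv_mk_tmul {R S : Type*} [CommRing R] [CommRing S] [Algebra R S]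
    (I : Ideal R) (Q : Type*) [AddCommGroup Q] [Module R Q] [Module S Q] [IsScalarTower R S Q]
    (s : S) (q : Q) :
    quotTensorAddEquiv I Q (Ideal.Quotient.mk _ s ⊗ₜ[S] q) = 1 ⊗ₜ[R] (s • q) := by
  simp only [quotTensorAddEquiv, AddEquiv.trans_apply, LinearEquiv.coe_toAddEquiv,
    LinearEquiv.coe_addEquiv_apply, quotTensorEquivQuotSMul_mk_tmul]
  rfl

open TensorProduct in
theorem quotTensorAddEquiv_smul {R S : Type*} [CommRing R] [CommRing S] [Algebra R S]
    (I : Ideal R) (Q : Type*) [AddCommGroup Q] [Module R Q] [Module S Q] [IsScalarTower R S Q]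
    (r : R) (x : (S ⧸ I.map (algebraMap R S)) ⊗[S] Q) :
    quotTensorAddEquiv I Q (algebraMap R S r • x) = r • quotTensorAddEquiv I Q x := by
  induction x with
  | zero => simp
  | add x y hx hy => rw [smul_add, map_add, hx, hy, map_add, smul_add]
  | tmul a q =>
    obtain ⟨s, rfl⟩ := Ideal.Quotient.mk_surjective a
    rw [← tmul_smul, quotTensorAddEquiv_mk_tmul, quotTensorAddEquiv_mk_tmul, ← tmul_smul,
      algebraMap_smul, smul_comm]

open MonoidalCategory in
/-- Tensoring with `S ⧸ I S` over `S` agrees, after restriction of scalars along `φ : R → S`, with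
tensoring with `R ⧸ I` over `R`. -/
noncomputable def tensoringQuotMapCompRestrictScalarsIso {R S : Type u} [CommRing R] [CommRing S]
    (φ : R →+* S) (I : Ideal R) :
    (tensoringLeft (ModuleCat.{u} S)).obj (ModuleCat.of S (S ⧸ I.map φ)) ⋙
        ModuleCat.restrictScalars φ ≅
      ModuleCat.restrictScalars φ ⋙
        (tensoringLeft (ModuleCat.{u} R)).obj (ModuleCat.of R (R ⧸ I)) :=
  letI := φ.toAlgebra
  NatIso.ofComponents
    (fun Q =>
      letI : Module R Q := Module.compHom Q φ
      haveI : IsScalarTower R S Q := ⟨fun r s q => mul_smul (φ r) s q⟩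
      let A : ModuleCat R := (ModuleCat.restrictScalars φ).obj
        (ModuleCat.of S (TensorProduct S (S ⧸ I.map φ) Q))
      let B : ModuleCat R := ModuleCat.of R (TensorProduct R (R ⧸ I) Q)
      let e : A ≃ₗ[R] B :=
        { toFun := quotTensorAddEquiv (S := S) I Q
          invFun := (quotTensorAddEquiv (S := S) I Q).symm
          left_inv := (quotTensorAddEquiv (S := S) I Q).left_inv
          right_inv := (quotTensorAddEquiv (S := S) I Q).right_inv
          map_add' := (quotTensorAddEquiv (S := S) I Q).map_add
          map_smul' := quotTensorAddEquiv_smul I Q }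
      e.toModuleIso)
    (by
      intro Q Q' f
      let : Module R Q := Module.compHom Q φ
      have : IsScalarTower R S Q := ⟨fun r s q => mul_smul (φ r) s q⟩
      let : Module R Q' := Module.compHom Q' φ
      have : IsScalarTower R S Q' := ⟨fun r s q => mul_smul (φ r) s q⟩
      let f' : Q →ₗ[R] Q' := { f.hom with map_smul' := fun r x => f.hom.map_smul (φ r) x }
      ext x
      change quotTensorAddEquiv (S := S) I Q' (TensorProduct.map LinearMap.id f.hom x) =
        TensorProduct.map (LinearMap.id (R := R) (M := R ⧸ I)) f'
          (quotTensorAddEquiv (S := S) I Q x)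
      change TensorProduct S (S ⧸ I.map φ) Q at x
      induction x with
      | zero => simp only [map_zero]
      | add x y hx hy => simp only [map_add, hx, hy]
      | tmul a q =>
        obtain ⟨s, rfl⟩ := Ideal.Quotient.mk_surjective a
        refine (quotTensorAddEquiv_mk_tmul I Q' s (f.hom q)).trans ?_
        refine Eq.trans ?_ (congrArg _ (quotTensorAddEquiv_mk_tmul I Q s q)).symm
        rw [TensorProduct.map_tmul, ← f.hom.map_smul]
        rfl)

theorem Module.Projective.trans_of_free {R S : Type*} [CommRing R] [CommRing S] [Algebra R S]
    [Module.Free R S] (Q : Type*) [AddCommGroup Q] [Module R Q] [Module S Q] [IsScalarTower R S Q]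
    [Module.Projective S Q] : Module.Projective R Q := by
  obtain ⟨s, hs⟩ := Module.projective_def'.mp (inferInstance : Module.Projective S Q)
  exact Module.Projective.of_split (s.restrictScalars R)
    ((Finsupp.linearCombination S (id : Q → Q)).restrictScalars R)
    (LinearMap.ext fun x => LinearMap.congr_fun hs x)

theorem restrictScalars_preservesProjectiveObjects {R S : Type u} [CommRing R] [CommRing S]
    (φ : R →+* S) (hφ : φ.IsFree) :
    (ModuleCat.restrictScalars.{u} φ).PreservesProjectiveObjects where
  projective_obj {Q} hQ := by
    let := φ.toAlgebra
    let : Module R Q := Module.compHom Q φ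
    have : IsScalarTower R S Q := ⟨fun r s q => mul_smul (φ r) s q⟩
    have : Module.Free R S := hφ
    have : Module.Projective S Q := (IsProjective.iff_projective Q).mpr hQ
    exact (IsProjective.iff_projective (R := R) Q).mp (Module.Projective.trans_of_free (S := S) Q)

open MonoidalCategory in
theorem nonempty_restrictScalars_tor_iso {R S : Type u} [CommRing R] [CommRing S]
    (φ : R →+* S) (hφ : φ.IsFree) (I : Ideal R)
    (Y : ModuleCat.{u} S) (h : ℕ) :
    Nonempty ((ModuleCat.restrictScalars φ).obj
        (((Tor (ModuleCat.{u} S) h).obj (ModuleCat.of S (S ⧸ I.map φ))).obj Y) ≅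
      ((Tor (ModuleCat.{u} R) h).obj (ModuleCat.of R (R ⧸ I))).obj
        ((ModuleCat.restrictScalars φ).obj Y)) := by
  have := restrictScalars_preservesProjectiveObjects φ hφ
  let Q := projectiveResolution Y
  let F := (tensoringLeft (ModuleCat.{u} S)).obj (ModuleCat.of S (S ⧸ I.map φ))
  let G := (tensoringLeft (ModuleCat.{u} R)).obj (ModuleCat.of R (R ⧸ I))
  let ρ := ModuleCat.restrictScalars.{u} φ
  let e : F ⋙ ρ ≅ ρ ⋙ G := tensoringQuotMapCompRestrictScalarsIso φ I
  let C := (F.mapHomologicalComplex (ComplexShape.down ℕ)).obj Q.complex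
  have i₁ : ρ.obj ((F.leftDerived h).obj Y) ≅ ρ.obj (C.homology h) :=
    ρ.mapIso (Q.isoLeftDerivedObj F h)
  have i₂ : ρ.obj (C.homology h) ≅
      ((ρ.mapHomologicalComplex (ComplexShape.down ℕ)).obj C).homology h :=
    ((C.sc h).mapHomologyIso ρ).symm
  have i₃ : ((ρ.mapHomologicalComplex (ComplexShape.down ℕ)).obj C).homology h ≅
      ((G.mapHomologicalComplex (ComplexShape.down ℕ)).obj
        (ρ.mapProjectiveResolution Q).complex).homology h :=
    (HomologicalComplex.homologyFunctor _ _ h).mapIso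
      ((NatIso.mapHomologicalComplex e (ComplexShape.down ℕ)).app Q.complex)
  have i₄ := (ρ.mapProjectiveResolution Q).isoLeftDerivedObj G h
  exact ⟨i₁ ≪≫ i₂ ≪≫ i₃ ≪≫ i₄.symm⟩

theorem Module.Basis.mem_ideal_map_iff {ι R S : Type*} [CommRing R] [CommRing S] [Algebra R S]
    (b : Module.Basis ι R S) (I : Ideal R) (x : S) :
    x ∈ I.map (algebraMap R S) ↔ ∀ i, b.repr x i ∈ I := by
  constructor
  · intro hx i
    have hx' : x ∈ (I • ⊤ : Submodule R S) := by
      rw [Ideal.smul_top_eq_map]; exact hx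
    refine Submodule.smul_induction_on hx' (fun r hr s _ => ?_) fun x y hx hy => ?_
    · simpa using I.mul_mem_right _ hr
    · simpa using I.add_mem hx hy
  · intro hx
    rw [← b.linearCombination_repr x, Finsupp.linearCombination_apply]
    refine Ideal.sum_mem _ fun i _ => ?_
    simp only [Algebra.smul_def]
    exact Ideal.mul_mem_right _ _ (Ideal.mem_map_of_mem _ (hx i))

theorem Ideal.map_iInf_of_free {ι R S : Type*} [CommRing R] [CommRing S]
    (φ : R →+* S) (hφ : φ.IsFree) (I : ι → Ideal R) :
    (⨅ k, I k).map φ = ⨅ k, (I k).map φ := by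
  let := φ.toAlgebra
  have : Module.Free R S := hφ
  let b := Module.Free.chooseBasis R S
  ext x
  change x ∈ (⨅ k, I k).map (algebraMap R S) ↔ x ∈ ⨅ k, (I k).map (algebraMap R S)
  simp only [b.mem_ideal_map_iff, Submodule.mem_iInf]
  exact forall_comm

theorem free_of_bijective_sum {ι R S : Type*} [CommRing R] [CommRing S] (φ : R →+* S) (b : ι → S)
    (hb : Function.Bijective fun f : ι →₀ R => f.sum fun i r => φ r * b i) :
    φ.IsFree := by
  let := φ.toAlgebra
  exact Module.Free.of_equiv (LinearEquiv.ofBijective (Finsupp.linearCombination R b) hb)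

theorem kdim_restrictScalars {K R S : Type} [Field K] [CommRing R] [CommRing S]
    [Algebra K R] [Algebra K S] (φ : R →ₐ[K] S) (M : ModuleCat.{0} S) :
    kdim K R ((ModuleCat.restrictScalars (φ : R →+* S)).obj M) = kdim K S M := by
  have key : (Module.compHom ((ModuleCat.restrictScalars (φ : R →+* S)).obj M)
      (algebraMap K R) : Module K M) = Module.compHom M (algebraMap K S) := by
    refine Module.ext' _ _ fun r x => ?_
    change φ (algebraMap K R r) • x = algebraMap K S r • x
    rw [φ.commutes]
  exact congrArg (fun i : Module K M => @Module.rank K M _ _ i) key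

theorem kdim_congr {K R : Type} [Field K] [CommRing R] [Algebra K R] {M N : ModuleCat.{0} R}
    (e : M ≅ N) : kdim K R M = kdim K R N := by
  let _ : Module K M := Module.compHom M (algebraMap K R)
  let _ : Module K N := Module.compHom N (algebraMap K R)
  exact LinearEquiv.rank_eq
    ({ e.toLinearEquiv with
      map_smul' := fun r x => e.toLinearEquiv.map_smul (algebraMap K R r) x } : M ≃ₗ[K] N)

theorem nonempty_restrictScalars_quotient_iso {R S : Type} [CommRing R] [CommRing S]
    (φ : R →+* S) (I : Ideal R) (J : Ideal S) (hI : J.comap φ = I)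
    (hJ : Function.Surjective ((Ideal.Quotient.mk J).comp φ)) :
    Nonempty ((ModuleCat.restrictScalars φ).obj (ModuleCat.of S (S ⧸ J)) ≅
      ModuleCat.of R (R ⧸ I)) := by
  let f : R ⧸ I →+* S ⧸ J := Ideal.quotientMap J φ hI.ge
  have hf : Function.Bijective f :=
    ⟨Ideal.quotientMap_injective' hI.le, fun y => by
      obtain ⟨r, rfl⟩ := hJ y
      exact ⟨Ideal.Quotient.mk I r, rfl⟩⟩
  let A : ModuleCat R := ModuleCat.of R (R ⧸ I)
  let B : ModuleCat R := (ModuleCat.restrictScalars φ).obj (ModuleCat.of S (S ⧸ J))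
  let g : A →ₗ[R] B :=
    { toFun := f
      map_add' := f.map_add
      map_smul' := fun r x => by
        obtain ⟨x, rfl⟩ := Ideal.Quotient.mk_surjective x
        exact f.map_mul (Ideal.Quotient.mk I r) (Ideal.Quotient.mk I x) }
  exact ⟨(LinearEquiv.ofBijective g hf).toModuleIso.symm⟩

theorem span_range_X_eq_ker_constantCoeff (σ K : Type*) [CommRing K] :
    Ideal.span (Set.range (X : σ → MvPolynomial σ K)) =
      RingHom.ker (constantCoeff : MvPolynomial σ K →+* K) := by
  refine le_antisymm (Ideal.span_le.mpr ?_) fun p hp => ?_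
  · rintro _ ⟨i, rfl⟩
    simp
  · rw [← Set.image_univ, mem_ideal_span_X_image]
    intro d hd
    by_contra! h
    have hd0 : d = 0 := Finsupp.ext fun i => h i (Set.mem_univ i)
    rw [mem_support_iff, hd0] at hd
    exact hd hp

theorem bijective_sum_aeval_X_pow_mul_monomial {σ K : Type*} [Finite σ] [CommRing K] (ℓ : σ → ℕ)
    (hℓ : ∀ j, 0 < ℓ j) :
    Function.Bijective fun f : (Π j, Fin (ℓ j)) →₀ MvPolynomial σ K =>
      f.sum fun r p => (aeval fun j => (X j : MvPolynomial σ K) ^ ℓ j) p *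
        monomial (Finsupp.equivFunOnFinite.symm fun j => (r j : ℕ)) 1 := by
  let φ : MvPolynomial σ K →ₐ[K] MvPolynomial σ K := aeval fun j => X j ^ ℓ j
  let e (r : Π j, Fin (ℓ j)) : σ →₀ ℕ := Finsupp.equivFunOnFinite.symm fun j => (r j : ℕ)
  let T : ((Π j, Fin (ℓ j)) →₀ MvPolynomial σ K) →ₗ[K] MvPolynomial σ K :=
    Finsupp.lsum K fun r => (LinearMap.mulRight K (monomial (e r) 1)).comp φ.toLinearMap
  let U : MvPolynomial σ K →ₗ[K] ((Π j, Fin (ℓ j)) →₀ MvPolynomial σ K) :=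
    (basisMonomials σ K).constr K fun d =>
      Finsupp.single (fun j => ⟨d j % ℓ j, Nat.mod_lt _ (hℓ j)⟩)
        (monomial (Finsupp.equivFunOnFinite.symm fun j => d j / ℓ j) 1)
  have hU (d : σ →₀ ℕ) : U (monomial d 1) =
      Finsupp.single (fun j => ⟨d j % ℓ j, Nat.mod_lt _ (hℓ j)⟩)
        (monomial (Finsupp.equivFunOnFinite.symm fun j => d j / ℓ j) 1) := by
    have := (basisMonomials σ K).constr_basis K (fun d : σ →₀ ℕ =>
      Finsupp.single (fun j => (⟨d j % ℓ j, Nat.mod_lt _ (hℓ j)⟩ : Fin (ℓ j)))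
        (monomial (Finsupp.equivFunOnFinite.symm fun j => d j / ℓ j) (1 : K))) d
    rwa [coe_basisMonomials] at this
  have hφ (q : σ →₀ ℕ) : φ (monomial q 1) =
      monomial (Finsupp.equivFunOnFinite.symm fun j => ℓ j * q j) 1 := by
    have := Fintype.ofFinite σ
    rw [aeval_monomial, map_one, one_mul, Finsupp.prod_fintype _ _ (by simp), monomial_eq, C_1,
      one_mul, Finsupp.prod_fintype _ _ (by simp)]
    simp [pow_mul]
  have hT (r : Π j, Fin (ℓ j)) (q : σ →₀ ℕ) : T (Finsupp.single r (monomial q 1)) =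
      monomial (Finsupp.equivFunOnFinite.symm fun j => ℓ j * q j + r j) 1 := by
    simp only [T, Finsupp.lsum_single, LinearMap.comp_apply, AlgHom.toLinearMap_apply, hφ,
      LinearMap.mulRight_apply, monomial_mul, mul_one]
    exact congrArg (fun a => monomial a (1 : K)) (Finsupp.ext fun j => rfl)
  have hTU : T ∘ₗ U = LinearMap.id := by
    refine (basisMonomials σ K).ext fun d => ?_
    rw [coe_basisMonomials, LinearMap.comp_apply, hU, hT, LinearMap.id_apply]
    refine congrArg (fun a => monomial a (1 : K)) (Finsupp.ext fun j => ?_)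
    exact Nat.div_add_mod _ _
  have hUT : U ∘ₗ T = LinearMap.id := by
    refine Finsupp.lhom_ext' fun r => (basisMonomials σ K).ext fun q => ?_
    rw [coe_basisMonomials, LinearMap.comp_apply, LinearMap.comp_apply, Finsupp.lsingle_apply, hT,
      hU, LinearMap.comp_apply, LinearMap.id_apply, Finsupp.lsingle_apply]
    congr 1
    · ext j
      simp [Nat.mod_eq_of_lt (r j).isLt]
    · refine congrArg (fun a => monomial a (1 : K)) (Finsupp.ext fun j => ?_)
      simp [Nat.mul_add_div (hℓ j), Nat.div_eq_of_lt (r j).isLt]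
  exact Function.bijective_iff_has_inverse.mpr
    ⟨U, LinearMap.congr_fun hUT, LinearMap.congr_fun hTU⟩

/-- Let `Γ = ⋂_{k=1}^n (x_1^{ℓ_1},…,x̂_k^{ℓ_k},…,x_n^{ℓ_n})^m ⊆ S` and
`Γ̄ = ⋂_{k=1}^n (y_1,…,ŷ_k,…,y_n)^m ⊆ P`.  Then the total Betti numbers of `Γ` coincide
with those of `Γ̄`: `dim_K Tor_h^S(S/Γ, S/𝔪) = dim_K Tor_h^P(P/Γ̄, P/𝔪)` for all `h`. -/
theorem totalBetti_fat_grid_eq_totalBetti_fat_points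
    (K : Type) [Field K] [Infinite K] (n : ℕ) (hn : 2 ≤ n)
    (ℓ : Fin n → ℕ) (hℓ : ∀ j, 0 < ℓ j) (m : ℕ) (hm : 0 < m) :
    ∀ h : ℕ,
      torBetti K n
          (⨅ k : Fin n,
            (Ideal.span ((fun j : Fin n => (X j : MvPolynomial (Fin n) K) ^ ℓ j) ''
              {j | j ≠ k})) ^ m) h =
        torBetti K n
          (⨅ k : Fin n,
            (Ideal.span ((fun j : Fin n => (X j : MvPolynomial (Fin n) K)) ''
              {j | j ≠ k})) ^ m) h := by
  intro h
  let φ : MvPolynomial (Fin n) K →ₐ[K] MvPolynomial (Fin n) K := aeval fun j => X j ^ ℓ j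
  have hφ : (φ : MvPolynomial (Fin n) K →+* MvPolynomial (Fin n) K).IsFree :=
    free_of_bijective_sum (φ : MvPolynomial (Fin n) K →+* MvPolynomial (Fin n) K)
      (fun r : Π j, Fin (ℓ j) =>
        monomial (Finsupp.equivFunOnFinite.symm fun j => (r j : ℕ)) (1 : K))
      (bijective_sum_aeval_X_pow_mul_monomial ℓ hℓ)
  have hmap : (⨅ k : Fin n, (Ideal.span ((fun j : Fin n => (X j : MvPolynomial (Fin n) K) ^ ℓ j) ''
        {j | j ≠ k})) ^ m) =
      (⨅ k : Fin n, (Ideal.span ((fun j : Fin n => (X j : MvPolynomial (Fin n) K)) ''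
        {j | j ≠ k})) ^ m).map (φ : MvPolynomial (Fin n) K →+* MvPolynomial (Fin n) K) := by
    rw [Ideal.map_iInf_of_free _ hφ]
    refine iInf_congr fun k => ?_
    rw [Ideal.map_pow, Ideal.map_span, Set.image_image]
    simp [φ]
  have hcoeff : (constantCoeff : MvPolynomial (Fin n) K →+* K).comp
      (φ : MvPolynomial (Fin n) K →+* MvPolynomial (Fin n) K) = constantCoeff := by
    refine MvPolynomial.ringHom_ext (fun a => by simp [φ]) fun j => ?_
    simp [φ, (hℓ j).ne']
  obtain ⟨e⟩ := nonempty_restrictScalars_quotient_iso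
    (φ : MvPolynomial (Fin n) K →+* MvPolynomial (Fin n) K)
    (Ideal.span (Set.range (X : Fin n → MvPolynomial (Fin n) K)))
    (Ideal.span (Set.range (X : Fin n → MvPolynomial (Fin n) K)))
    (by rw [span_range_X_eq_ker_constantCoeff, RingHom.comap_ker, hcoeff])
    (fun y => by
      obtain ⟨p, rfl⟩ := Ideal.Quotient.mk_surjective y
      refine ⟨C (constantCoeff p), Ideal.Quotient.eq.mpr ?_⟩
      rw [span_range_X_eq_ker_constantCoeff, RingHom.mem_ker]
      simp [φ])
  obtain ⟨i⟩ := nonempty_restrictScalars_tor_iso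
    (φ : MvPolynomial (Fin n) K →+* MvPolynomial (Fin n) K) hφ
    (⨅ k : Fin n, (Ideal.span ((fun j : Fin n => (X j : MvPolynomial (Fin n) K)) ''
        {j | j ≠ k})) ^ m)
    (ModuleCat.of _ (MvPolynomial (Fin n) K ⧸
      Ideal.span (Set.range (X : Fin n → MvPolynomial (Fin n) K)))) h
  rw [hmap]
  unfold torBetti
  rw [← kdim_restrictScalars φ]
  exact kdim_congr (i ≪≫ Functor.mapIso _ e)
end
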